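/- Let n = 2k+1 with k ≥ 1, let c be a positive definite symmetric n×n real matrix and a an arbitrary n×n real matrix. Then there exist a symmetric n×n real matrix x, a matrix g ∈ GL(n,ℝ) with det g > 0, and a tuple λ₁ ≥ λ₂ ≥ ⋯ ≥ λ_k ≥ 0 such that Ad*(x,g)(c,a) = (1ₙ, H(λ)); moreover the tuple (λ₁,…,λ_k) with λ₁ ≥ ⋯ ≥ λ_k ≥ 0 for which (1ₙ, H(λ)) lies in the coadjoint orbit of (c,a) is unique. -/

import Mathlib

open Matrix

/-- The coadjoint action Ad*(x,g)(c,a) = (ǧ c g⁻¹, g a g⁻¹ + x ǧ c g⁻¹),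
    where ǧ = (gᵀ)⁻¹. -/
noncomputable def coadjAct {n : ℕ} (x g c a : Matrix (Fin n) (Fin n) ℝ) :
    Matrix (Fin n) (Fin n) ℝ × Matrix (Fin n) (Fin n) ℝ :=
  ((gᵀ)⁻¹ * c * g⁻¹, g * a * g⁻¹ + x * ((gᵀ)⁻¹ * c * g⁻¹))

/-- The n×n skew-symmetric block-diagonal matrix with k consecutive 2×2 blocks
    [[0, λᵢ],[−λᵢ, 0]] (and a final zero block if n > 2k). -/
def Hmat (n k : ℕ) (lam : Fin k → ℝ) : Matrix (Fin n) (Fin n) ℝ :=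
  fun i j =>
    if h1 : (j : ℕ) = (i : ℕ) + 1 ∧ (i : ℕ) % 2 = 0 ∧ (i : ℕ) / 2 < k then
      lam ⟨(i : ℕ) / 2, h1.2.2⟩
    else if h2 : (i : ℕ) = (j : ℕ) + 1 ∧ (j : ℕ) % 2 = 0 ∧ (j : ℕ) / 2 < k then
      -lam ⟨(j : ℕ) / 2, h2.2.2⟩
    else 0

open scoped InnerProductSpace MatrixOrder

/-- Two antitone tuples listing the same multiset coincide. -/
theorem Antitone.eq_of_map_univ_eq {n : ℕ} {f g : Fin n → ℝ} (hf : Antitone f) (hg : Antitone g)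
    (h : Finset.univ.val.map f = Finset.univ.val.map g) : f = g := by
  simp only [Fin.univ_val_map, Multiset.coe_eq_coe] at h
  exact List.ofFn_injective (h.eq_of_sortedGE hf.sortedGE_ofFn hg.sortedGE_ofFn)

/-- The quadratic form of a skew-adjoint operator vanishes. -/
theorem inner_self_apply_eq_zero_of_skew {E : Type*} [NormedAddCommGroup E]
    [InnerProductSpace ℝ E] {T : E →ₗ[ℝ] E} (hT : ∀ x y, ⟪T x, y⟫_ℝ = -⟪x, T y⟫_ℝ) (x : E) :
    ⟪x, T x⟫_ℝ = 0 := by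
  have h := hT x x
  rw [real_inner_comm] at h
  linarith

/-- A skew-adjoint operator on a nontrivial finite-dimensional real inner product space attains
its norm at a unit vector, which is an eigenvector of its square. -/
theorem exists_unit_vector_norm_attaining {E : Type*} [NormedAddCommGroup E]
    [InnerProductSpace ℝ E] [FiniteDimensional ℝ E] [Nontrivial E] (T : E →ₗ[ℝ] E)
    (hT : ∀ x y, ⟪T x, y⟫_ℝ = -⟪x, T y⟫_ℝ) :
    ∃ e : E, ‖e‖ = 1 ∧ T (T e) = -(‖T e‖ ^ 2) • e ∧ ∀ x, ‖T x‖ ≤ ‖T e‖ * ‖x‖ := by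
  have hcont : Continuous T := T.continuous_of_finiteDimensional
  obtain ⟨e, he, hmax⟩ := (isCompact_sphere (0 : E) 1).exists_isMaxOn
    (NormedSpace.sphere_nonempty.mpr zero_le_one) (hcont.norm.continuousOn)
  have he1 : ‖e‖ = 1 := by simpa using he
  let S : E →L[ℝ] E := LinearMap.toContinuousLinearMap (-(T ∘ₗ T))
  have hS : ∀ x, S x = -T (T x) := fun x => rfl
  have hsymm : (S : E →ₗ[ℝ] E).IsSymmetric := fun x y => by
    simp only [ContinuousLinearMap.coe_coe, hS, inner_neg_left, inner_neg_right, hT, neg_neg]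
  have hre : ∀ x, S.reApplyInnerSelf x = ‖T x‖ ^ 2 := fun x => by
    rw [ContinuousLinearMap.reApplyInnerSelf_apply, hS, inner_neg_left, hT, neg_neg,
      real_inner_self_eq_norm_sq]
    rfl
  have hSmax : IsMaxOn S.reApplyInnerSelf (Metric.sphere (0 : E) ‖e‖) e := by
    intro x hx
    rw [he1] at hx
    simp only [Set.mem_ofPred_eq, hre]
    exact pow_le_pow_left₀ (norm_nonneg _) (hmax hx) 2
  have heig := (hsymm.isSelfAdjoint.hasEigenvector_of_isLocalExtrOn
    (norm_ne_zero_iff.mp (by rw [he1]; exact one_ne_zero)) (Or.inr hSmax.localize)).apply_eq_smul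
  have hray : S.rayleighQuotient e = ‖T e‖ ^ 2 := by
    simp [ContinuousLinearMap.rayleighQuotient, hre, he1]
  refine ⟨e, he1, ?_, fun x => ?_⟩
  · rw [hray] at heig
    have h : -T (T e) = ‖T e‖ ^ 2 • e := heig
    rw [neg_smul, ← h, neg_neg]
  · rcases eq_or_ne x 0 with rfl | hx
    · simp
    have hx' : 0 < ‖x‖ := norm_pos_iff.mpr hx
    have h : ‖T (‖x‖⁻¹ • x)‖ ≤ ‖T e‖ := hmax (by simp [norm_smul, hx'.ne'])
    rw [map_smul, norm_smul, norm_inv, norm_norm, inv_mul_le_iff₀ hx'] at h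
    linarith

/-- A skew-adjoint operator in dimension at least two has an invariant oriented plane on which it
acts as its norm times a rotation by a right angle. -/
theorem exists_orthonormal_pair_of_skew {E : Type*} [NormedAddCommGroup E]
    [InnerProductSpace ℝ E] [FiniteDimensional ℝ E] (hE : 2 ≤ Module.finrank ℝ E) (T : E →ₗ[ℝ] E)
    (hT : ∀ x y, ⟪T x, y⟫_ℝ = -⟪x, T y⟫_ℝ) :
    ∃ (l : ℝ) (e f : E), 0 ≤ l ∧ ‖e‖ = 1 ∧ ‖f‖ = 1 ∧ ⟪e, f⟫_ℝ = 0 ∧ T e = -l • f ∧ T f = l • e ∧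
      ∀ x, ‖T x‖ ≤ l * ‖x‖ := by
  have : Nontrivial E := Module.nontrivial_of_finrank_pos (R := ℝ) (by omega)
  obtain ⟨e, he, hTe, hmax⟩ := exists_unit_vector_norm_attaining T hT
  rcases eq_or_ne (T e) 0 with h0 | h0
  · have hT0 : ∀ x, T x = 0 := fun x => by simpa [h0] using hmax x
    let b := stdOrthonormalBasis ℝ E
    refine ⟨0, b ⟨0, by omega⟩, b ⟨1, by omega⟩, le_rfl, b.norm_eq_one _, b.norm_eq_one _,
      b.orthonormal.2 (by simp), ?_, ?_, fun x => ?_⟩ <;> simp [hT0]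
  · have hl : ‖T e‖ ≠ 0 := norm_ne_zero_iff.mpr h0
    have horth := inner_self_apply_eq_zero_of_skew hT e
    refine ⟨‖T e‖, e, -(‖T e‖⁻¹ • T e), norm_nonneg _, he, ?_, ?_, ?_, ?_, hmax⟩
    · simp [norm_smul, hl]
    · simp [inner_smul_right, horth]
    · rw [neg_smul, smul_neg, neg_neg, smul_inv_smul₀ hl]
    · rw [map_neg, map_smul, hTe, neg_smul, smul_neg, neg_neg, smul_smul, pow_two,
        inv_mul_cancel_left₀ hl]

theorem Hmat_cons_succ_succ (n k : ℕ) (l : ℝ) (lam : Fin k → ℝ) (i j : Fin n) :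
    Hmat (n + 2) (k + 1) (Fin.cons l lam) i.succ.succ j.succ.succ = Hmat n k lam i j := by
  have h : ∀ (m : ℕ) (h : (m + 1 + 1) / 2 < k + 1) (h' : m / 2 < k),
      (Fin.cons l lam : Fin (k + 1) → ℝ) ⟨(m + 1 + 1) / 2, h⟩ = lam ⟨m / 2, h'⟩ := by
    intro m h h'
    have : (⟨(m + 1 + 1) / 2, h⟩ : Fin (k + 1)) = Fin.succ ⟨m / 2, h'⟩ := by
      ext; simp only [Fin.val_succ]; omega
    rw [this, Fin.cons_succ]
  simp only [Hmat, Fin.val_succ]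
  split_ifs <;> first | omega | exact h _ _ _ | exact congrArg _ (h _ _ _) | rfl

theorem Orthonormal.cons_cons {E : Type*} [NormedAddCommGroup E] [InnerProductSpace ℝ E] {n : ℕ}
    {b : Fin n → E} (hb : Orthonormal ℝ b) {e f : E} (he : ‖e‖ = 1) (hf : ‖f‖ = 1)
    (hef : ⟪e, f⟫_ℝ = 0) (heb : ∀ i, ⟪e, b i⟫_ℝ = 0) (hfb : ∀ i, ⟪f, b i⟫_ℝ = 0) :
    Orthonormal ℝ (Fin.cons e (Fin.cons f b) : Fin (n + 1 + 1) → E) := by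
  have hfe : ⟪f, e⟫_ℝ = 0 := by rw [real_inner_comm, hef]
  have hbe : ∀ i, ⟪b i, e⟫_ℝ = 0 := fun i => by rw [real_inner_comm, heb]
  have hbf : ∀ i, ⟪b i, f⟫_ℝ = 0 := fun i => by rw [real_inner_comm, hfb]
  have hbb := orthonormal_iff_ite.mp hb
  rw [orthonormal_iff_ite]
  refine Fin.cases (Fin.cases ?_ (Fin.cases ?_ fun j => ?_))
    (Fin.cases (Fin.cases ?_ (Fin.cases ?_ fun j => ?_))
      fun i => Fin.cases ?_ (Fin.cases ?_ fun j => ?_)) <;>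
  simp [he, hf, hef, hfe, heb, hfb, hbe, hbf, hbb, Fin.ext_iff]

theorem inner_cons_cons_eq_Hmat {E : Type*} [NormedAddCommGroup E] [InnerProductSpace ℝ E]
    {n k : ℕ} {T : E →ₗ[ℝ] E} {l : ℝ} {lam : Fin k → ℝ} {b : Fin n → E} {e f : E}
    (he : ‖e‖ = 1) (hf : ‖f‖ = 1) (hef : ⟪e, f⟫_ℝ = 0) (hTe : T e = -l • f) (hTf : T f = l • e)
    (heb : ∀ i, ⟪e, b i⟫_ℝ = 0) (hfb : ∀ i, ⟪f, b i⟫_ℝ = 0)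
    (hTeb : ∀ i, ⟪e, T (b i)⟫_ℝ = 0) (hTfb : ∀ i, ⟪f, T (b i)⟫_ℝ = 0)
    (hH : ∀ i j, ⟪b i, T (b j)⟫_ℝ = Hmat n k lam i j) (i j : Fin (n + 1 + 1)) :
    ⟪(Fin.cons e (Fin.cons f b) : Fin (n + 1 + 1) → E) i,
      T ((Fin.cons e (Fin.cons f b) : Fin (n + 1 + 1) → E) j)⟫_ℝ =
      Hmat (n + 2) (k + 1) (Fin.cons l lam) i j := by
  have hfe : ⟪f, e⟫_ℝ = 0 := by rw [real_inner_comm, hef]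
  have hbe : ∀ i, ⟪b i, e⟫_ℝ = 0 := fun i => by rw [real_inner_comm, heb]
  have hbf : ∀ i, ⟪b i, f⟫_ℝ = 0 := fun i => by rw [real_inner_comm, hfb]
  revert i j
  refine Fin.cases (Fin.cases ?_ (Fin.cases ?_ fun j => ?_))
    (Fin.cases (Fin.cases ?_ (Fin.cases ?_ fun j => ?_))
      fun i => Fin.cases ?_ (Fin.cases ?_ fun j => ?_))
  rotate_right
  · exact (hH i j).trans (Hmat_cons_succ_succ n k l lam i j).symm
  all_goals simp [hTe, hTf, inner_smul_right, he, hf, hef, hfe, hbe, hbf, hTeb, hTfb, Hmat]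

/-- Orthogonal normal form of a skew-adjoint operator in odd dimension. -/
theorem exists_orthonormal_Hmat_of_skew (k : ℕ) : ∀ {E : Type*} [NormedAddCommGroup E]
    [InnerProductSpace ℝ E] [FiniteDimensional ℝ E], Module.finrank ℝ E = 2 * k + 1 →
    ∀ (T : E →ₗ[ℝ] E), (∀ x y, ⟪T x, y⟫_ℝ = -⟪x, T y⟫_ℝ) →
    ∀ M : ℝ, (∀ x, ‖T x‖ ≤ M * ‖x‖) →
    ∃ (lam : Fin k → ℝ) (b : Fin (2 * k + 1) → E), Antitone lam ∧ (∀ i, 0 ≤ lam i) ∧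
      (∀ i, lam i ≤ M) ∧ Orthonormal ℝ b ∧
      ∀ i j, ⟪b i, T (b j)⟫_ℝ = Hmat (2 * k + 1) k lam i j := by
  induction k with
  | zero =>
    intro E _ _ _ hE T hT M _
    let b := (stdOrthonormalBasis ℝ E).reindex (finCongr hE)
    refine ⟨Fin.elim0, b, fun i => i.elim0, fun i => i.elim0, fun i => i.elim0, b.orthonormal,
      fun i j => ?_⟩
    rw [show j = i from Fin.ext (by omega), inner_self_apply_eq_zero_of_skew hT]
    simp [Hmat]
  | succ k ih =>
    intro E _ _ _ hE T hT M hTM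
    obtain ⟨l, e, f, hl, he, hf, hef, hTe, hTf, hmax⟩ :=
      exists_orthonormal_pair_of_skew (by omega) T hT
    have hfe : ⟪f, e⟫_ℝ = 0 := by rw [real_inner_comm, hef]
    have hlM : l ≤ M := by simpa [hTe, norm_smul, hf, he, abs_of_nonneg hl] using hTM e
    have hon : Orthonormal ℝ ![e, f] := by
      rw [orthonormal_iff_ite]
      intro i j
      fin_cases i <;> fin_cases j <;> simp [he, hf, hef, hfe]
    let K : Submodule ℝ E := Submodule.span ℝ (Set.range ![e, f])
    have hK : Module.finrank ℝ K = 2 := by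
      simpa using finrank_span_eq_card hon.linearIndependent
    have hKo : Module.finrank ℝ Kᗮ = 2 * k + 1 := by
      have := K.finrank_add_finrank_orthogonal
      omega
    have hmem : ∀ x, x ∈ Kᗮ ↔ ⟪e, x⟫_ℝ = 0 ∧ ⟪f, x⟫_ℝ = 0 := by
      intro x
      rw [Submodule.mem_orthogonal]
      constructor
      · exact fun h => ⟨h e (Submodule.subset_span ⟨0, rfl⟩), h f (Submodule.subset_span ⟨1, rfl⟩)⟩
      · rintro ⟨h1, h2⟩ u hu
        induction hu using Submodule.span_induction with
        | mem u hu =>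
          obtain ⟨i, rfl⟩ := hu
          fin_cases i
          exacts [h1, h2]
        | zero => exact inner_zero_left _
        | add u v _ _ hu hv => rw [inner_add_left, hu, hv, add_zero]
        | smul a u _ hu => rw [inner_smul_left, hu, mul_zero]
    have hinv : ∀ x ∈ Kᗮ, T x ∈ Kᗮ := by
      intro x hx
      obtain ⟨h1, h2⟩ := (hmem x).mp hx
      refine (hmem _).mpr ⟨?_, ?_⟩
      · rw [← neg_eq_zero, ← hT, hTe, inner_smul_left, h2, mul_zero]
      · rw [← neg_eq_zero, ← hT, hTf, inner_smul_left, h1, mul_zero]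
    obtain ⟨lam, b, hanti, hnn, hle, hb, hH⟩ := ih hKo (T.restrict hinv)
      (fun x y => hT x y) l (fun x => hmax x)
    have hbe : ∀ i, ⟪e, (b i : E)⟫_ℝ = 0 := fun i => ((hmem _).mp (b i).2).1
    have hbf : ∀ i, ⟪f, (b i : E)⟫_ℝ = 0 := fun i => ((hmem _).mp (b i).2).2
    have hTbe : ∀ i, ⟪e, T (b i : E)⟫_ℝ = 0 := fun i => ((hmem _).mp (hinv _ (b i).2)).1
    have hTbf : ∀ i, ⟪f, T (b i : E)⟫_ℝ = 0 := fun i => ((hmem _).mp (hinv _ (b i).2)).2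
    refine ⟨Fin.cons l lam,
      (Fin.cons e (Fin.cons f fun i => (b i : E)) : Fin (2 * k + 1 + 1 + 1) → E), ?_, ?_, ?_, ?_, ?_⟩
    · intro i j hij
      cases i using Fin.cases with
      | zero => cases j using Fin.cases with
        | zero => exact le_rfl
        | succ j => exact hle j
      | succ i => cases j using Fin.cases with
        | zero => simp at hij
        | succ j => exact hanti (Fin.succ_le_succ_iff.mp hij)
    · exact Fin.cases hl hnn
    · exact Fin.cases hlM fun i => (hle i).trans hlM
    · exact (hb.comp_linearIsometry Kᗮ.subtypeₗᵢ).cons_cons he hf hef hbe hbf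
    · exact inner_cons_cons_eq_Hmat he hf hef hTe hTf hbe hbf hTbe hTbf hH

/-- Orthogonal normal form of a skew-symmetric matrix of odd size. -/
theorem exists_orthogonal_conj_eq_Hmat {k : ℕ} (B : Matrix (Fin (2 * k + 1)) (Fin (2 * k + 1)) ℝ)
    (hB : Bᵀ = -B) :
    ∃ (P : Matrix (Fin (2 * k + 1)) (Fin (2 * k + 1)) ℝ) (lam : Fin k → ℝ), P * Pᵀ = 1 ∧
      Antitone lam ∧ (∀ i, 0 ≤ lam i) ∧ P * B * Pᵀ = Hmat (2 * k + 1) k lam := by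
  let T := Matrix.toEuclideanLin B
  have hinner : ∀ x y : EuclideanSpace ℝ (Fin (2 * k + 1)),
      ⟪x, T y⟫_ℝ = ∑ i, ∑ j, x i * B i j * y j := by
    intro x y
    simp only [T, PiLp.inner_apply, Matrix.toLpLin_apply, Matrix.mulVec, dotProduct,
      RCLike.inner_apply, conj_trivial, Finset.sum_mul]
    exact Finset.sum_congr rfl fun i _ => Finset.sum_congr rfl fun j _ => by ring
  have hT : ∀ x y, ⟪T x, y⟫_ℝ = -⟪x, T y⟫_ℝ := by
    intro x y
    rw [real_inner_comm, hinner, hinner, Finset.sum_comm, ← Finset.sum_neg_distrib]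
    refine Finset.sum_congr rfl fun i _ => ?_
    rw [← Finset.sum_neg_distrib]
    refine Finset.sum_congr rfl fun j _ => ?_
    have h : B j i = -B i j := congrFun (congrFun hB i) j
    rw [h]
    ring
  let T' := LinearMap.toContinuousLinearMap T
  obtain ⟨lam, b, hanti, hnn, -, hb, hH⟩ := exists_orthonormal_Hmat_of_skew k (by simp) T hT
    ‖T'‖ T'.le_opNorm
  refine ⟨Matrix.of fun i j => b i j, lam, ?_, hanti, hnn, ?_⟩
  · ext i j
    have h := orthonormal_iff_ite.mp hb j i
    simp only [PiLp.inner_apply, RCLike.inner_apply, conj_trivial] at h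
    simp only [Matrix.mul_apply, Matrix.transpose_apply, Matrix.of_apply, Matrix.one_apply, h,
      eq_comm]
  · ext i j
    rw [← hH, hinner, Finset.sum_comm]
    simp only [Matrix.mul_apply, Matrix.transpose_apply, Matrix.of_apply, Finset.sum_mul]

theorem Hmat_transpose (n k : ℕ) (lam : Fin k → ℝ) : (Hmat n k lam)ᵀ = -Hmat n k lam := by
  ext i j
  simp only [Hmat, Matrix.transpose_apply, Matrix.neg_apply]
  split_ifs <;> first | omega | simp

/-- The diagonal of `-H(λ)²`. -/
def HmatSqDiag (k : ℕ) (lam : Fin k → ℝ) (i : Fin (2 * k + 1)) : ℝ :=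
  if h : (i : ℕ) / 2 < k then lam ⟨(i : ℕ) / 2, h⟩ ^ 2 else 0

theorem Hmat_mul_transpose (k : ℕ) (lam : Fin k → ℝ) :
    Hmat (2 * k + 1) k lam * (Hmat (2 * k + 1) k lam)ᵀ = Matrix.diagonal (HmatSqDiag k lam) := by
  ext i j
  simp only [Matrix.mul_apply, Matrix.transpose_apply]
  by_cases hi : (i : ℕ) / 2 < k
  · let p : Fin (2 * k + 1) := ⟨if (i : ℕ) % 2 = 0 then i + 1 else i - 1, by split_ifs <;> omega⟩
    rw [Finset.sum_eq_single p]
    · by_cases hij : i = j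
      · subst hij
        rw [Matrix.diagonal_apply_eq]
        rcases Nat.mod_two_eq_zero_or_one i with h | h
        · simp [HmatSqDiag, Hmat, p, h, hi, pow_two]
        · have h1 : ((i : ℕ) - 1) / 2 = (i : ℕ) / 2 := by omega
          have h2 : ((i : ℕ) - 1) % 2 = 0 := by omega
          have h3 : (i : ℕ) = i - 1 + 1 := by omega
          have h4 : ¬ (i : ℕ) - 1 = i + 1 := by omega
          simp [HmatSqDiag, Hmat, p, h, h1, h2, ← h3, hi, h4, pow_two]
      · rw [Matrix.diagonal_apply_ne _ hij]
        have hij' : (i : ℕ) ≠ j := fun h => hij (Fin.ext h)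
        refine mul_eq_zero_of_right _ ?_
        simp only [Hmat, p]
        split_ifs <;> first | omega | rfl
    · intro q _ hq
      have hq' : (q : ℕ) ≠ if (i : ℕ) % 2 = 0 then (i : ℕ) + 1 else i - 1 :=
        fun h => hq (Fin.ext h)
      refine mul_eq_zero_of_left ?_ _
      simp only [Hmat]
      split_ifs at hq' ⊢ <;> first | omega | rfl
    · simp
  · have h0 : Matrix.diagonal (HmatSqDiag k lam) i j = 0 := by
      by_cases hij : i = j
      · subst hij; simp [HmatSqDiag, hi]
      · exact Matrix.diagonal_apply_ne _ hij
    rw [h0]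
    refine Finset.sum_eq_zero fun q _ => mul_eq_zero_of_left ?_ _
    simp only [Hmat]
    split_ifs <;> first | omega | rfl

theorem HmatSqDiag_antitone {k : ℕ} {lam : Fin k → ℝ} (h : Antitone lam) (h0 : ∀ i, 0 ≤ lam i) :
    Antitone (HmatSqDiag k lam) := by
  intro i j hij
  have hij' : (i : ℕ) / 2 ≤ (j : ℕ) / 2 := Nat.div_le_div_right hij
  simp only [HmatSqDiag]
  split_ifs
  · exact pow_le_pow_left₀ (h0 _) (h hij') 2
  · omega
  · positivity
  · exact le_rfl

/-- The ordered parameters of `H(λ)` are invariants of orthogonal conjugation. -/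
theorem eq_of_orthogonal_conj_Hmat {k : ℕ} {lam lam' : Fin k → ℝ} (h : Antitone lam)
    (h0 : ∀ i, 0 ≤ lam i) (h' : Antitone lam') (h0' : ∀ i, 0 ≤ lam' i)
    {P : Matrix (Fin (2 * k + 1)) (Fin (2 * k + 1)) ℝ} (hP : P * Pᵀ = 1)
    (hc : P * Hmat (2 * k + 1) k lam * Pᵀ = Hmat (2 * k + 1) k lam') : lam = lam' := by
  have hP' : Pᵀ * P = 1 := mul_eq_one_comm.mp hP
  have hD : P * Matrix.diagonal (HmatSqDiag k lam) * Pᵀ = Matrix.diagonal (HmatSqDiag k lam') := by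
    rw [← Hmat_mul_transpose, ← Hmat_mul_transpose, ← hc]
    simp only [Matrix.transpose_mul, Matrix.transpose_transpose, Matrix.mul_assoc]
    rw [← Matrix.mul_assoc Pᵀ P, hP', Matrix.one_mul]
  have hchar : (Matrix.diagonal (HmatSqDiag k lam)).charpoly =
      (Matrix.diagonal (HmatSqDiag k lam')).charpoly := by
    have hconj := Matrix.charpoly_units_conj ⟨P, Pᵀ, hP, hP'⟩ (Matrix.diagonal (HmatSqDiag k lam))
    rw [Matrix.inv_eq_right_inv hP, hD] at hconj
    exact hconj.symm
  have hroots := congrArg Polynomial.roots hchar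
  simp only [Matrix.charpoly_diagonal, Finset.prod_eq_multiset_prod] at hroots
  have hms : ∀ s : Fin (2 * k + 1) → ℝ,
      (Multiset.map (fun i => Polynomial.X - Polynomial.C (s i)) Finset.univ.val).prod.roots =
        Finset.univ.val.map s := fun s => by
    rw [← Polynomial.roots_multiset_prod_X_sub_C (Finset.univ.val.map s), Multiset.map_map]
    rfl
  rw [hms, hms] at hroots
  have heq := (HmatSqDiag_antitone h h0).eq_of_map_univ_eq (HmatSqDiag_antitone h' h0') hroots
  funext i
  have hi := congrFun heq ⟨2 * i, by omega⟩
  simp only [HmatSqDiag, Nat.mul_div_cancel_left _ two_pos, i.2, dite_true] at hi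
  exact (pow_left_inj₀ (h0 i) (h0' i) two_ne_zero).mp hi

theorem transpose_inv_mul_mul_inv_eq_one_iff {n : ℕ} {g c : Matrix (Fin n) (Fin n) ℝ}
    (hg : IsUnit g.det) : (gᵀ)⁻¹ * c * g⁻¹ = 1 ↔ c = gᵀ * g := by
  have hgt : IsUnit (gᵀ).det := by rwa [Matrix.det_transpose]
  constructor
  · intro h
    calc c = gᵀ * ((gᵀ)⁻¹ * c * g⁻¹) * g := by
          simp only [Matrix.mul_assoc]
          rw [Matrix.nonsing_inv_mul _ hg, Matrix.mul_one, ← Matrix.mul_assoc,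
            Matrix.mul_nonsing_inv _ hgt, Matrix.one_mul]
      _ = gᵀ * g := by rw [h, Matrix.mul_one]
  · rintro rfl
    rw [← Matrix.mul_assoc, Matrix.nonsing_inv_mul _ hgt, Matrix.one_mul,
      Matrix.mul_nonsing_inv _ hg]

/-- Twice the normal form is the skew part of the conjugated second component. -/
theorem two_smul_Hmat_of_coadjAct_eq {n k : ℕ} {x g c a : Matrix (Fin n) (Fin n) ℝ}
    {lam : Fin k → ℝ} (hx : x.IsSymm) (h : coadjAct x g c a = (1, Hmat n k lam)) :
    (2 : ℝ) • Hmat n k lam = g * a * g⁻¹ - (g * a * g⁻¹)ᵀ := by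
  obtain ⟨h1, h2⟩ := Prod.mk.inj h
  rw [h1, Matrix.mul_one] at h2
  have h3 := congrArg Matrix.transpose h2
  rw [Hmat_transpose, Matrix.transpose_add, hx.eq] at h3
  rw [two_smul, ← h2]
  nth_rw 2 [h2]
  rw [eq_neg_iff_add_eq_zero, add_comm, ← eq_neg_iff_add_eq_zero] at h3
  rw [h3]
  abel

theorem orbit_normal_form_odd (k : ℕ) (hk : 1 ≤ k)
    (c a : Matrix (Fin (2 * k + 1)) (Fin (2 * k + 1)) ℝ) (hc : c.PosDef) :
    (∃ (x g : Matrix (Fin (2 * k + 1)) (Fin (2 * k + 1)) ℝ) (lam : Fin k → ℝ),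
      x.IsSymm ∧ 0 < g.det ∧ Antitone lam ∧ (∀ i, 0 ≤ lam i) ∧
      coadjAct x g c a = (1, Hmat (2 * k + 1) k lam)) ∧
    (∀ lam lam' : Fin k → ℝ,
      Antitone lam → (∀ i, 0 ≤ lam i) → Antitone lam' → (∀ i, 0 ≤ lam' i) →
      (∃ x g : Matrix (Fin (2 * k + 1)) (Fin (2 * k + 1)) ℝ,
        x.IsSymm ∧ 0 < g.det ∧ coadjAct x g c a = (1, Hmat (2 * k + 1) k lam)) →
      (∃ x g : Matrix (Fin (2 * k + 1)) (Fin (2 * k + 1)) ℝ,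
        x.IsSymm ∧ 0 < g.det ∧ coadjAct x g c a = (1, Hmat (2 * k + 1) k lam')) →
      lam = lam') := by
  constructor
  · obtain ⟨g₀, hg₀⟩ : ∃ g₀ : Matrix (Fin (2 * k + 1)) (Fin (2 * k + 1)) ℝ, c = g₀ᵀ * g₀ := by
      obtain ⟨g₀, h⟩ := CStarAlgebra.nonneg_iff_eq_star_mul_self.mp hc.posSemidef.nonneg
      exact ⟨g₀, by rw [h, Matrix.star_eq_conjTranspose, Matrix.conjTranspose_eq_transpose_of_trivial]⟩
    let B₀ := g₀ * a * g₀⁻¹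
    obtain ⟨P, lam, hP, hanti, hnn, hPB⟩ :=
      exists_orthogonal_conj_eq_Hmat ((2⁻¹ : ℝ) • (B₀ - B₀ᵀ))
        (by rw [Matrix.transpose_smul, Matrix.transpose_sub, Matrix.transpose_transpose,
          ← smul_neg, neg_sub])
    have hP' : Pᵀ * P = 1 := mul_eq_one_comm.mp hP
    have hPinv : P⁻¹ = Pᵀ := Matrix.inv_eq_right_inv hP
    have hQ : ∃ Q : Matrix (Fin (2 * k + 1)) (Fin (2 * k + 1)) ℝ, 0 < Q.det ∧ c = Qᵀ * Q ∧
        Q * a * Q⁻¹ = P * B₀ * Pᵀ := by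
      have hcQ : c = (P * g₀)ᵀ * (P * g₀) := by
        rw [Matrix.transpose_mul, Matrix.mul_assoc, ← Matrix.mul_assoc Pᵀ, hP', Matrix.one_mul, hg₀]
      have hdet : (P * g₀).det ≠ 0 := by
        have h := hc.det_pos
        intro h0
        rw [hcQ, Matrix.det_mul, h0, mul_zero] at h
        exact lt_irrefl _ h
      have hconj : (P * g₀) * a * (P * g₀)⁻¹ = P * B₀ * Pᵀ := by
        rw [Matrix.mul_inv_rev, hPinv]
        simp only [B₀, Matrix.mul_assoc]
      rcases lt_or_gt_of_ne hdet with h | h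
      · refine ⟨-(P * g₀), ?_, ?_, ?_⟩
        · rw [Matrix.det_neg, Fintype.card_fin, (odd_two_mul_add_one k).neg_one_pow]
          linarith
        · rw [Matrix.transpose_neg, neg_mul_neg, ← hcQ]
        · have hinv : (-(P * g₀))⁻¹ = -(P * g₀)⁻¹ := Matrix.inv_eq_right_inv (by
            rw [neg_mul_neg, Matrix.mul_nonsing_inv _ hdet.isUnit])
          rw [hinv, ← hconj, neg_mul, neg_mul_neg]
      · exact ⟨P * g₀, h, hcQ, hconj⟩
    obtain ⟨Q, hdet, hcQ, hconj⟩ := hQ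
    refine ⟨-(P * ((2⁻¹ : ℝ) • (B₀ + B₀ᵀ)) * Pᵀ), Q, lam, ?_, hdet, hanti, hnn, ?_⟩
    · simp only [Matrix.IsSymm, Matrix.transpose_neg, Matrix.transpose_mul, Matrix.transpose_smul,
        Matrix.transpose_add, Matrix.transpose_transpose, Matrix.mul_assoc, add_comm B₀ᵀ]
    · have h1 := (transpose_inv_mul_mul_inv_eq_one_iff hdet.ne'.isUnit).mpr hcQ
      rw [coadjAct, h1, Matrix.mul_one, hconj, ← hPB, ← sub_eq_add_neg, ← Matrix.sub_mul,
        ← Matrix.mul_sub]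
      congr 4
      ext i j
      simp only [Matrix.sub_apply, Matrix.smul_apply, Matrix.add_apply, smul_eq_mul]
      ring
  · rintro lam lam' h h0 h' h0' ⟨x, g, hx, hg, hact⟩ ⟨x', g', hx', hg', hact'⟩
    have hu := hg.ne'.isUnit
    have hu' := hg'.ne'.isUnit
    have hc1 := (transpose_inv_mul_mul_inv_eq_one_iff hu).mp (Prod.mk.inj hact).1
    have hc2 := (transpose_inv_mul_mul_inv_eq_one_iff hu').mp (Prod.mk.inj hact').1
    have hPt : (g' * g⁻¹)ᵀ * (g' * g⁻¹) = 1 := by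
      rw [Matrix.transpose_mul, Matrix.mul_assoc, ← Matrix.mul_assoc g'ᵀ, ← hc2,
        ← Matrix.mul_assoc, Matrix.transpose_nonsing_inv,
        transpose_inv_mul_mul_inv_eq_one_iff hu]
      exact hc1
    have hP := mul_eq_one_comm.mp hPt
    refine eq_of_orthogonal_conj_Hmat h h0 h' h0' hP ?_
    have hPinv : (g' * g⁻¹)ᵀ = g * g'⁻¹ := by
      rw [← Matrix.inv_eq_right_inv hP, Matrix.mul_inv_rev, Matrix.nonsing_inv_nonsing_inv _ hu]
    have hconj : (g' * g⁻¹) * (g * a * g⁻¹) * (g' * g⁻¹)ᵀ = g' * a * g'⁻¹ := by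
      rw [hPinv]
      simp only [Matrix.mul_assoc]
      rw [Matrix.nonsing_inv_mul_cancel_left _ _ hu, Matrix.nonsing_inv_mul_cancel_left _ _ hu]
    have e1 := two_smul_Hmat_of_coadjAct_eq hx hact
    have e2 := two_smul_Hmat_of_coadjAct_eq hx' hact'
    refine smul_right_injective _ (two_ne_zero (α := ℝ)) ?_
    change (2 : ℝ) • _ = (2 : ℝ) • _
    rw [e2, ← hconj, ← Matrix.smul_mul, ← Matrix.mul_smul, e1]
    generalize g' * g⁻¹ = P
    generalize g * a * g⁻¹ = A
    simp only [Matrix.transpose_mul, Matrix.transpose_transpose, Matrix.mul_sub, Matrix.sub_mul,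
      Matrix.mul_assoc]
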